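/- Define Q(u,v) = Γ(u,v)/Γ(u) for u > 0 and v ≥ 0, where Γ(u,v) is the upper incomplete gamma function and Γ(u) = Γ(u,0) is the gamma function. Then for every fixed v > 0, the function u ↦ Q(u,v) is strictly increasing on (0,∞): if u₁ > u₂ > 0 then Q(u₁,v) > Q(u₂,v). -/

import Mathlib

open MeasureTheory

/-- The upper incomplete gamma function `Γ(u,v) = ∫_v^∞ x^(u-1) e^(-x) dx`. -/
noncomputable def upperGamma (u v : ℝ) : ℝ :=
  ∫ x in Set.Ioi v, x ^ (u - 1) * Real.exp (-x)

/-!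
Passing from the parameter `u₂` to `u₁ > u₂` multiplies the gamma integrand by the increasing
function `x ^ (u₁ - u₂)`. Reweighting by an increasing function `r` multiplies the mass to the right
of `v` by more than `r v`, and the mass to the left of `v` by at most `r v`, so the fraction of the
mass lying to the right of `v` increases.
-/

open Set

theorem div_add_lt_div_add_of_le_mul_of_mul_lt {K : Type*} [Field K] [LinearOrder K]
    [IsStrictOrderedRing K] {a₁ a₂ b₁ b₂ c : K} (ha₂ : 0 < a₂) (hb₂ : 0 ≤ b₂)
    (hab₁ : 0 < a₁ + b₁) (ha : a₁ ≤ c * a₂) (hb : c * b₂ < b₁) :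
    b₂ / (a₂ + b₂) < b₁ / (a₁ + b₁) := by
  rw [div_lt_div_iff₀ (by positivity) hab₁]
  calc b₂ * (a₁ + b₁) ≤ b₂ * (c * a₂ + b₁) := by gcongr
    _ = c * b₂ * a₂ + b₁ * b₂ := by ring
    _ < b₁ * a₂ + b₁ * b₂ := by gcongr
    _ = b₁ * (a₂ + b₂) := by ring

section SetIntegral

variable {α : Type*} [MeasurableSpace α] {μ : Measure α}

theorem setIntegral_pos_of_forall_pos {s : Set α} {f : α → ℝ} (hs : MeasurableSet s)
    (hμs : μ s ≠ 0) (hf : IntegrableOn f s μ) (hpos : ∀ x ∈ s, 0 < f x) :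
    0 < ∫ x in s, f x ∂μ := by
  have support_inter : Function.support f ∩ s = s :=
    inter_eq_right.mpr fun x hx ↦ (hpos x hx).ne'
  rw [setIntegral_pos_iff_support_of_nonneg_ae
    (ae_restrict_of_forall_mem hs fun x hx ↦ (hpos x hx).le) hf, support_inter]
  exact pos_iff_ne_zero.mpr hμs

theorem setIntegral_lt_setIntegral_of_forall_lt {s : Set α} {f g : α → ℝ} (hs : MeasurableSet s)
    (hμs : μ s ≠ 0) (hf : IntegrableOn f s μ) (hg : IntegrableOn g s μ)
    (hlt : ∀ x ∈ s, f x < g x) :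
    ∫ x in s, f x ∂μ < ∫ x in s, g x ∂μ := by
  rw [← sub_pos, ← integral_sub hg hf]
  exact setIntegral_pos_of_forall_pos hs hμs (hg.sub hf) fun x hx ↦ sub_pos.mpr (hlt x hx)

variable [LinearOrder α] [TopologicalSpace α] [OrderClosedTopology α] [OpensMeasurableSpace α]

theorem setIntegral_Ioi_div_lt_of_strictMonoOn {w r : α → ℝ} {a b : α} (hab : a < b)
    (hμ_Ioc : μ (Ioc a b) ≠ 0) (hμ_Ioi : μ (Ioi b) ≠ 0)
    (hw : IntegrableOn w (Ioi a) μ) (hrw : IntegrableOn (fun x ↦ r x * w x) (Ioi a) μ)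
    (hw_pos : ∀ x ∈ Ioi a, 0 < w x) (hr : StrictMonoOn r (Ioi a))
    (hrw_pos : 0 < ∫ x in Ioi a, r x * w x ∂μ) :
    (∫ x in Ioi b, w x ∂μ) / ∫ x in Ioi a, w x ∂μ <
      (∫ x in Ioi b, r x * w x ∂μ) / ∫ x in Ioi a, r x * w x ∂μ := by
  have left_sub : Ioc a b ⊆ Ioi a := Ioc_subset_Ioi_self
  have right_sub : Ioi b ⊆ Ioi a := Ioi_subset_Ioi hab.le
  have split {f : α → ℝ} (hf : IntegrableOn f (Ioi a) μ) :
      ∫ x in Ioi a, f x ∂μ = (∫ x in Ioc a b, f x ∂μ) + ∫ x in Ioi b, f x ∂μ := by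
    rw [← setIntegral_union Ioc_disjoint_Ioi_same measurableSet_Ioi (hf.mono_set left_sub)
      (hf.mono_set right_sub), Ioc_union_Ioi_eq_Ioi hab.le]
  have left_le : ∫ x in Ioc a b, r x * w x ∂μ ≤ r b * ∫ x in Ioc a b, w x ∂μ := by
    rw [← integral_const_mul]
    refine setIntegral_mono_on (hrw.mono_set left_sub) ((hw.mono_set left_sub).const_mul _)
      measurableSet_Ioc fun x hx ↦ ?_
    exact mul_le_mul_of_nonneg_right (hr.monotoneOn hx.1 hab hx.2) (hw_pos x hx.1).le
  have right_lt : r b * ∫ x in Ioi b, w x ∂μ < ∫ x in Ioi b, r x * w x ∂μ := by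
    rw [← integral_const_mul]
    refine setIntegral_lt_setIntegral_of_forall_lt measurableSet_Ioi hμ_Ioi
      ((hw.mono_set right_sub).const_mul _) (hrw.mono_set right_sub) fun x hx ↦ ?_
    exact mul_lt_mul_of_pos_right (hr hab (right_sub hx) hx) (hw_pos x (right_sub hx))
  have left_pos : 0 < ∫ x in Ioc a b, w x ∂μ :=
    setIntegral_pos_of_forall_pos measurableSet_Ioc hμ_Ioc (hw.mono_set left_sub)
      fun x hx ↦ hw_pos x hx.1
  have right_nonneg : 0 ≤ ∫ x in Ioi b, w x ∂μ :=
    setIntegral_nonneg measurableSet_Ioi fun x hx ↦ (hw_pos x (right_sub hx)).le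
  rw [split hrw] at hrw_pos ⊢
  rw [split hw]
  exact div_add_lt_div_add_of_le_mul_of_mul_lt left_pos right_nonneg hrw_pos left_le right_lt

end SetIntegral

theorem integrableOn_rpow_mul_exp_neg_Ioi {u : ℝ} (hu : 0 < u) :
    IntegrableOn (fun x : ℝ ↦ x ^ (u - 1) * Real.exp (-x)) (Ioi 0) := by
  simpa only [mul_comm] using Real.GammaIntegral_convergent hu

theorem upperGamma_zero_right {u : ℝ} (hu : 0 < u) : upperGamma u 0 = Real.Gamma u := by
  simp only [upperGamma, Real.Gamma_eq_integral hu, mul_comm]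

theorem rpow_sub_mul_rpow_mul_exp_neg (u₁ u₂ : ℝ) {x : ℝ} (hx : 0 < x) :
    x ^ (u₁ - u₂) * (x ^ (u₂ - 1) * Real.exp (-x)) = x ^ (u₁ - 1) * Real.exp (-x) := by
  rw [← mul_assoc, ← Real.rpow_add hx, sub_add_sub_cancel]

theorem upperGamma_eq_setIntegral_rpow_sub_mul (u₁ u₂ : ℝ) {v : ℝ} (hv : 0 ≤ v) :
    upperGamma u₁ v = ∫ x in Ioi v, x ^ (u₁ - u₂) * (x ^ (u₂ - 1) * Real.exp (-x)) :=
  setIntegral_congr_fun measurableSet_Ioi fun _ hx ↦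
    (rpow_sub_mul_rpow_mul_exp_neg u₁ u₂ (hv.trans_lt hx)).symm

/-- For fixed `v > 0`, the function `u ↦ Q(u,v) = Γ(u,v)/Γ(u)` is
strictly increasing on `(0,∞)`, where `Γ(u) = Γ(u,0)`. -/
theorem stmt_8 (v : ℝ) (hv : 0 < v) (u1 u2 : ℝ) (hu2 : 0 < u2) (hu : u2 < u1) :
    upperGamma u2 v / upperGamma u2 0 < upperGamma u1 v / upperGamma u1 0 := by
  have hu1 : 0 < u1 := hu2.trans hu
  have integrable_u1 : IntegrableOn
      (fun x : ℝ ↦ x ^ (u1 - u2) * (x ^ (u2 - 1) * Real.exp (-x))) (Ioi 0) :=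
    (integrableOn_rpow_mul_exp_neg_Ioi hu1).congr_fun
      (fun _ hx ↦ (rpow_sub_mul_rpow_mul_exp_neg u1 u2 hx).symm) measurableSet_Ioi
  have rpow_strictMono : StrictMonoOn (fun x : ℝ ↦ x ^ (u1 - u2)) (Ioi 0) :=
    (Real.strictMonoOn_rpow_Ici_of_exponent_pos (sub_pos.mpr hu)).mono Ioi_subset_Ici_self
  have gamma_pos : 0 < upperGamma u1 0 :=
    (Real.Gamma_pos_of_pos hu1).trans_eq (upperGamma_zero_right hu1).symm
  rw [upperGamma_eq_setIntegral_rpow_sub_mul u1 u2 le_rfl] at gamma_pos ⊢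
  rw [upperGamma_eq_setIntegral_rpow_sub_mul u1 u2 hv.le]
  exact setIntegral_Ioi_div_lt_of_strictMonoOn hv (by simpa using hv) (by simp)
    (integrableOn_rpow_mul_exp_neg_Ioi hu2) integrable_u1
    (fun x (hx : 0 < x) ↦ by positivity) rpow_strictMono gamma_pos
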